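/- Let G be a finite simple 2K2-free graph with maximum degree Δ(G) ≥ 5 whose clique number satisfies ω(G) ≤ Δ(G) − 1. Then G admits a proper vertex coloring with Δ(G) − 1 colors, i.e., χ(G) ≤ Δ(G) − 1. -/

import Mathlib

/-- A simple graph is `2K2`-free if it has no four distinct vertices `a b c d` with
`ab` and `cd` edges and none of `ac, ad, bc, bd` an edge. -/
def TwoK2Free {V : Type*} (G : SimpleGraph V) : Prop :=
  ¬ ∃ a b c d : V, a ≠ b ∧ a ≠ c ∧ a ≠ d ∧ b ≠ c ∧ b ≠ d ∧ c ≠ d ∧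
      G.Adj a b ∧ G.Adj c d ∧ ¬ G.Adj a c ∧ ¬ G.Adj a d ∧ ¬ G.Adj b c ∧ ¬ G.Adj b d

/-!
Put `k = Δ - 1`.

If `Q` is a clique with `k` vertices, every vertex of `Q` has at most two neighbours outside `Q`.
Colour `Q` by itself and give a vertex outside `Q` a colour depending only on its trace on `Q` and
not lying in that trace. Since `G` is `2K2`-free, the traces of two adjacent outer vertices cover
`Q` up to one vertex, so only pairs of such large traces have to receive different colours; as each
colour lies in at most two traces, Hall's theorem and a greedy choice produce the colours.

If there is no such clique and `k > 4`, deleting a maximal independent set lowers the degree bound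
by one, and induction applies. For `k = 4` the graph is `K4`-free. The non-neighbours of both ends
of an edge `ap` are independent, so four colours suffice as soon as the part of the neighbourhood
of `p` outside that of `a` is independent: the rest of the neighbourhood of `a` is a bipartite graph
on four vertices. Otherwise the neighbourhood of each vertex on an edge with two common neighbours
is a 5-cycle, and following these cycles around a vertex contradicts `2K2`-freeness.
-/

section

open SimpleGraph

variable {V : Type*} {G : SimpleGraph V}

theorem TwoK2Free.adj_or_adj (hG : TwoK2Free G) {a b c d : V} (hab : G.Adj a b)
    (hcd : G.Adj c d) : G.Adj a c ∨ G.Adj a d ∨ G.Adj b c ∨ G.Adj b d := by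
  by_contra! h
  obtain ⟨hac, had, hbc, hbd⟩ := h
  refine hG ⟨a, b, c, d, hab.ne, ?_, ?_, ?_, ?_, hcd.ne, hab, hcd, hac, had, hbc, hbd⟩
  · rintro rfl; exact had hcd
  · rintro rfl; exact hac hcd.symm
  · rintro rfl; exact hbd hcd
  · rintro rfl; exact hbc hcd.symm

theorem TwoK2Free.induce (hG : TwoK2Free G) (s : Set V) : TwoK2Free (G.induce s) := by
  rintro ⟨a, b, c, d, -, -, -, -, -, -, hab, hcd, hac, had, hbc, hbd⟩
  have := hG.adj_or_adj (induce_adj.1 hab) (induce_adj.1 hcd)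
  tauto

theorem colorable_add_of_induce_compl {s : Set V} {m n : ℕ} (hs : (G.induce s).Colorable m)
    (hsc : (G.induce sᶜ).Colorable n) : G.Colorable (m + n) := by
  classical
  obtain ⟨f⟩ := hs
  obtain ⟨g⟩ := hsc
  let C : G.Coloring (Fin m ⊕ Fin n) := Coloring.mk
    (fun v => if h : v ∈ s then .inl (f ⟨v, h⟩) else .inr (g ⟨v, h⟩)) fun {u v} huv => by
      by_cases hu : u ∈ s <;> by_cases hv : v ∈ s <;> simp only [hu, hv, dite_true, dite_false]
      · simpa using f.valid (induce_adj.2 huv)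
      · simp
      · simp
      · simpa using g.valid (induce_adj.2 huv)
  simpa using C.colorable

theorem induce_colorable_one {s : Set V} (hs : G.IsIndepSet s) : (G.induce s).Colorable 1 := by
  rw [colorable_one_iff, eq_bot_iff]
  exact fun u v huv => hs u.2 v.2 (Subtype.coe_ne_coe.2 huv.ne) huv

theorem colorable_two_of_isIndepSet {s : Set V} (hs : G.IsIndepSet s) (hsc : G.IsIndepSet sᶜ) :
    G.Colorable 2 :=
  colorable_add_of_induce_compl (induce_colorable_one hs) (induce_colorable_one hsc)

theorem TwoK2Free.colorable_add_two_of_isIndepSet (hG : TwoK2Free G) {a p : V} {n : ℕ}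
    (hap : G.Adj a p) (hind : G.IsIndepSet (G.neighborSet p \ G.neighborSet a))
    (hn : (G.induce (G.neighborSet a \ {p})).Colorable n) : G.Colorable (n + 2) := by
  have hna {v : V} (hv : v ∈ (G.neighborSet a \ {p})ᶜ) (hvp : v ≠ p) : ¬ G.Adj a v :=
    fun hav => hv ⟨hav, hvp⟩
  refine colorable_add_of_induce_compl hn (colorable_two_of_isIndepSet (s := {v | G.Adj p v}) ?_ ?_)
  · intro u hpu v hpv huv
    exact hind ⟨hpu, hna u.2 hpu.ne'⟩ ⟨hpv, hna v.2 hpv.ne'⟩ (Subtype.coe_ne_coe.2 huv)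
  · intro u hpu v hpv _ hadj
    rw [induce_adj] at hadj
    have hup : u.1 ≠ p := G.ne_of_adj_of_not_adj hadj hpv
    have hvp : v.1 ≠ p := G.ne_of_adj_of_not_adj hadj.symm hpu
    rcases hG.adj_or_adj hap hadj with h | h | h | h
    exacts [hna u.2 hup h, hna v.2 hvp h, hpu h, hpv h]

section SetFamilies

open Finset

variable {α : Type*} [DecidableEq α] {Q : Finset α} {𝓣 : Finset (Finset α)}

theorem card_le_card_biUnion_sdiff (hss : ∀ S ∈ 𝓣, S ⊂ Q)
    (hcover : ∀ q ∈ Q, #{S ∈ 𝓣 | q ∈ S} ≤ 2) (hcard : #𝓣 ≤ #Q) :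
    #𝓣 ≤ #(𝓣.biUnion (Q \ ·)) := by
  rcases 𝓣.eq_empty_or_nonempty with rfl | ⟨S₀, hS₀⟩
  · simp
  rcases lt_or_ge 2 #𝓣 with hthree | htwo
  · refine hcard.trans (card_le_card fun q hq => ?_)
    have hlt : #{S ∈ 𝓣 | q ∈ S} < #𝓣 := (hcover q hq).trans_lt hthree
    obtain ⟨S, hS, hqS⟩ := exists_mem_notMem_of_card_lt_card hlt
    exact mem_biUnion.2 ⟨S, hS, mem_sdiff.2 ⟨hq, fun h => hqS (mem_filter.2 ⟨hS, h⟩)⟩⟩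
  by_contra! hlt
  set U := 𝓣.biUnion (Q \ ·)
  have hU : #U ≤ 1 := by lia
  have heq : ∀ S ∈ 𝓣, S = Q \ U := fun S hS => by
    have hsub : Q \ S ⊆ U := subset_biUnion_of_mem (Q \ ·) hS
    have hpos : 0 < #(Q \ S) := card_pos.2 (sdiff_nonempty.2 (hss S hS).2)
    rw [← eq_of_subset_of_card_le hsub (by lia), Finset.sdiff_sdiff_eq_self (hss S hS).1]
  have hone : #𝓣 ≤ 1 := card_le_one.2 fun S hS T hT => (heq S hS).trans (heq T hT).symm
  have hpos : 0 < #U := (card_pos.2 (sdiff_nonempty.2 (hss S₀ hS₀).2)).trans_le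
    (card_le_card (subset_biUnion_of_mem (Q \ ·) hS₀))
  lia

theorem exists_injOn_mem_sdiff [Nonempty α] (hss : ∀ S ∈ 𝓣, S ⊂ Q)
    (hcover : ∀ q ∈ Q, #{S ∈ 𝓣 | q ∈ S} ≤ 2) (hcard : #𝓣 ≤ #Q) :
    ∃ f : Finset α → α, Set.InjOn f 𝓣 ∧ ∀ S ∈ 𝓣, f S ∈ Q \ S := by
  have hall (𝓢 : Finset 𝓣) : #𝓢 ≤ #(𝓢.biUnion fun S => Q \ S.1) := by
    have hsub : 𝓢.map (.subtype _) ⊆ 𝓣 := map_subtype_subset 𝓢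
    have := card_le_card_biUnion_sdiff (fun S hS => hss S (hsub hS))
      (fun q hq => (card_le_card (filter_subset_filter _ hsub)).trans (hcover q hq))
      ((card_le_card hsub).trans hcard)
    simpa [map_eq_image, image_biUnion, card_image_of_injective _ Subtype.val_injective] using this
  obtain ⟨f, hinj, hf⟩ := (all_card_le_biUnion_card_iff_exists_injective _).1 hall
  refine ⟨fun S => if h : S ∈ 𝓣 then f ⟨S, h⟩ else Classical.arbitrary α, ?_, ?_⟩
  · intro S hS T hT hST
    rw [mem_coe] at hS hT
    simp only [hS, hT, dite_true] at hST
    exact congrArg Subtype.val (hinj hST)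
  · intro S hS
    simpa only [hS, dite_true] using hf ⟨S, hS⟩

theorem card_le_one_of_forall_card_le (hss : ∀ S ∈ 𝓣, S ⊆ Q)
    (hcover : ∀ q ∈ Q, #{S ∈ 𝓣 | q ∈ S} ≤ 2) (hcard : #Q < #𝓣) {v : Finset α}
    (hmin : ∀ S ∈ 𝓣, #v ≤ #S) : #v ≤ 1 := by
  have hsum : #𝓣 * #v ≤ #Q * 2 := calc
    #𝓣 * #v ≤ ∑ S ∈ 𝓣, #(Q ∩ S) := by
      rw [← smul_eq_mul]
      exact card_nsmul_le_sum _ _ _ fun S hS => by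
        rw [inter_eq_right.2 (hss S hS)]; exact hmin S hS
    _ ≤ #Q * 2 := sum_card_inter_le hcover
  by_contra! h
  nlinarith

theorem card_filter_lt_card_sdiff {v : Finset α} (hv : v ∉ 𝓣) (hss : ∀ S ∈ insert v 𝓣, S ⊆ Q)
    (hcover : ∀ q ∈ Q, #{S ∈ insert v 𝓣 | q ∈ S} ≤ 2) (hmin : ∀ S ∈ 𝓣, #v ≤ #S)
    (hfour : 4 ≤ #Q) (hcard : #Q ≤ #𝓣) : #{S ∈ 𝓣 | #Q ≤ #(S ∪ v) + 1} < #(Q \ v) := by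
  have hvone : #v ≤ 1 := card_le_one_of_forall_card_le hss hcover
    (by rw [card_insert_of_notMem hv]; lia) (by simpa using hmin)
  have hpos {S : Finset α} (hS : S ∈ 𝓣) : 1 ≤ #(S \ v) := by
    refine card_pos.2 (sdiff_nonempty.2 fun hSv => hv ?_)
    rwa [← eq_of_subset_of_card_le hSv (hmin S hS)]
  -- Each `S` has an element outside `v`, and a counted one has at least `#Q - 1 - #v` of them,
  -- whereas each of the `#(Q \ v)` points lies in at most two sets.
  have hterm {S : Finset α} (hS : S ∈ 𝓣) :
      1 + (if #Q ≤ #(S ∪ v) + 1 then #Q - 2 - #v else 0) ≤ #((Q \ v) ∩ S) := by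
    have hinter : (Q \ v) ∩ S = S \ v := by
      rw [sdiff_inter_right_comm, inter_eq_right.2 (hss S (mem_insert_of_mem hS))]
    have hunion := card_sdiff_add_card S v
    have := hpos hS
    rw [hinter]
    split_ifs <;> lia
  have hsum : #𝓣 + #{S ∈ 𝓣 | #Q ≤ #(S ∪ v) + 1} * (#Q - 2 - #v) ≤ #(Q \ v) * 2 := calc
    _ = ∑ S ∈ 𝓣, (1 + if #Q ≤ #(S ∪ v) + 1 then #Q - 2 - #v else 0) := by
      rw [sum_add_distrib, ← sum_filter, sum_const, sum_const, smul_eq_mul, smul_eq_mul, mul_one]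
    _ ≤ ∑ S ∈ 𝓣, #((Q \ v) ∩ S) := sum_le_sum fun S hS => hterm hS
    _ ≤ #(Q \ v) * 2 := sum_card_inter_le fun q hq => (card_le_card
      (filter_subset_filter _ (subset_insert v 𝓣))).trans (hcover q (mem_sdiff.1 hq).1)
  have hQv : #(Q \ v) = #Q - #v := card_sdiff_of_subset (hss v (mem_insert_self v 𝓣))
  by_contra! hle
  have := Nat.mul_le_mul_left #{S ∈ 𝓣 | #Q ≤ #(S ∪ v) + 1} (show 2 - #v ≤ #Q - 2 - #v by lia)
  interval_cases #v <;> lia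

theorem exists_forall_mem_sdiff_and_ne (hfour : 4 ≤ #Q) (hss : ∀ S ∈ 𝓣, S ⊂ Q)
    (hcover : ∀ q ∈ Q, #{S ∈ 𝓣 | q ∈ S} ≤ 2) :
    ∃ f : Finset α → α, (∀ S ∈ 𝓣, f S ∈ Q \ S) ∧
      ∀ S ∈ 𝓣, ∀ T ∈ 𝓣, S ≠ T → #Q ≤ #(S ∪ T) + 1 → f S ≠ f T := by
  have : Nonempty α := (card_pos.1 (by lia : 0 < #Q)).to_type
  -- The sets are inserted by decreasing size: Hall's theorem colours the first `#Q` of them, and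
  -- every later set meets too few conflicts to run out of colours.
  induction 𝓣 using induction_on_min_value (f := (card : Finset α → ℕ)) with
  | empty => exact ⟨fun _ => Classical.arbitrary α, by simp⟩
  | insert v 𝓣 hv hmin ih =>
    rcases le_or_gt #(insert v 𝓣) #Q with hcard | hcard
    · obtain ⟨f, hinj, hf⟩ := exists_injOn_mem_sdiff hss hcover hcard
      exact ⟨f, hf, fun S hS T hT hST _ => hinj.ne hS hT hST⟩
    rw [card_insert_of_notMem hv, Nat.lt_succ_iff] at hcard
    obtain ⟨f, hf, hne⟩ := ih (fun S hS => hss S (mem_insert_of_mem hS)) fun q hq =>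
      (card_le_card (filter_subset_filter _ (subset_insert v 𝓣))).trans (hcover q hq)
    have hlt : #({S ∈ 𝓣 | #Q ≤ #(S ∪ v) + 1}.image f) < #(Q \ v) := card_image_le.trans_lt
      (card_filter_lt_card_sdiff hv (fun S hS => (hss S hS).1) hcover hmin hfour hcard)
    obtain ⟨q, hq, hqf⟩ := exists_mem_notMem_of_card_lt_card hlt
    have hfresh : ∀ S ∈ 𝓣, #Q ≤ #(S ∪ v) + 1 → f S ≠ q := fun S hS hSv hSq =>
      hqf (mem_image.2 ⟨S, mem_filter.2 ⟨hS, hSv⟩, hSq⟩)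
    have hSv : ∀ S ∈ 𝓣, S ≠ v := fun S hS => ne_of_mem_of_not_mem hS hv
    refine ⟨Function.update f v q, ?_, ?_⟩
    · simp only [forall_mem_insert, Function.update_self]
      exact ⟨hq, fun S hS => by rw [Function.update_of_ne (hSv S hS)]; exact hf S hS⟩
    · intro S hS T hT hST hcard
      rcases mem_insert.1 hS with rfl | hS' <;> rcases mem_insert.1 hT with rfl | hT'
      · exact absurd rfl hST
      · rw [Function.update_self, Function.update_of_ne hST.symm]
        exact (hfresh T hT' (by rwa [union_comm])).symm
      · rw [Function.update_self, Function.update_of_ne hST]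
        exact hfresh S hS' hcard
      · rw [Function.update_of_ne (hSv S hS'), Function.update_of_ne (hSv T hT')]
        exact hne S hS' T hT' hST hcard

end SetFamilies

section Traces

open Finset

open Classical in
/-- The trace of a vertex `v` on a finite vertex set `Q`: the neighbours of `v` in `Q`. -/
noncomputable def neighborTrace (G : SimpleGraph V) (Q : Finset V) (v : V) : Finset V :=
  {q ∈ Q | G.Adj v q}

variable {Q : Finset V} {n : ℕ} {u v : V}

theorem mem_neighborTrace {q : V} : q ∈ neighborTrace G Q v ↔ q ∈ Q ∧ G.Adj v q := by
  simp [neighborTrace]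

theorem neighborTrace_subset : neighborTrace G Q v ⊆ Q :=
  fun _ hq => (mem_neighborTrace.1 hq).1

theorem neighborTrace_ssubset (hQ : G.IsNClique n Q) (hn : G.CliqueFree (n + 1)) (v : V) :
    neighborTrace G Q v ⊂ Q := by
  classical
  refine neighborTrace_subset.ssubset_of_ne fun h => hn _ (hQ.insert (a := v) fun q hq => ?_)
  exact (mem_neighborTrace.1 (h.symm ▸ hq)).2

theorem TwoK2Free.card_le_card_neighborTrace_union [DecidableEq V] (hG : TwoK2Free G)
    (hQ : G.IsClique Q) (huv : G.Adj u v) :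
    #Q ≤ #(neighborTrace G Q u ∪ neighborTrace G Q v) + 1 := by
  by_contra! hlt
  have hsub : neighborTrace G Q u ∪ neighborTrace G Q v ⊆ Q :=
    union_subset neighborTrace_subset neighborTrace_subset
  obtain ⟨p, hp, q, hq, hpq⟩ := one_lt_card.1
    (show 1 < #(Q \ (neighborTrace G Q u ∪ neighborTrace G Q v)) by
      rw [card_sdiff_of_subset hsub]; lia)
  simp only [mem_sdiff, mem_union, mem_neighborTrace] at hp hq
  have := hG.adj_or_adj huv (hQ hp.1 hq.1 hpq)
  tauto

theorem TwoK2Free.neighborTrace_ne (hG : TwoK2Free G) (hQ : G.IsNClique n Q)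
    (hn : G.CliqueFree (n + 1)) (huv : G.Adj u v) : neighborTrace G Q u ≠ neighborTrace G Q v := by
  classical
  intro h
  have hle := hG.card_le_card_neighborTrace_union hQ.isClique huv
  rw [h, union_self, hQ.card_eq] at hle
  have hS : G.IsNClique #(neighborTrace G Q v) (neighborTrace G Q v) :=
    ⟨hQ.isClique.subset (coe_subset.2 neighborTrace_subset), rfl⟩
  have hSv := hS.insert (a := v) fun q hq => (mem_neighborTrace.1 hq).2
  have hSuv := hSv.insert (a := u) fun q hq => by
    rcases mem_insert.1 hq with rfl | hq
    · exact huv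
    · exact (mem_neighborTrace.1 (h ▸ hq)).2
  exact hn.mono (by lia) _ hSuv

theorem encard_neighborSet_sdiff_add_le (hQ : G.IsClique Q) {q : V} (hq : q ∈ Q) :
    (G.neighborSet q \ Q).encard + #Q ≤ (G.neighborSet q).encard + 1 := by
  have hsub : (Q : Set V) \ {q} ⊆ G.neighborSet q ∩ Q :=
    fun p hp => ⟨hQ hq hp.1 (Ne.symm hp.2), hp.1⟩
  calc (G.neighborSet q \ Q).encard + #Q
      = (G.neighborSet q \ Q).encard + ((Q : Set V) \ {q}).encard + 1 := by
        rw [add_assoc, Set.encard_sdiff_singleton_add_one (mem_coe.2 hq),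
          Set.encard_coe_eq_coe_finsetCard]
    _ ≤ (G.neighborSet q \ Q).encard + (G.neighborSet q ∩ Q).encard + 1 := by gcongr
    _ = (G.neighborSet q).encard + 1 := by rw [Set.encard_sdiff_add_encard_inter]

open Classical in
/-- The traces on `Q` of the vertices outside `Q`. -/
noncomputable def outerTraces (G : SimpleGraph V) (Q : Finset V) : Finset (Finset V) :=
  {S ∈ Q.powerset | ∃ v ∉ Q, neighborTrace G Q v = S}

theorem mem_outerTraces {S : Finset V} :
    S ∈ outerTraces G Q ↔ ∃ v ∉ Q, neighborTrace G Q v = S := by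
  simp only [outerTraces, mem_filter, mem_powerset, and_iff_right_iff_imp]
  rintro ⟨v, -, rfl⟩
  exact neighborTrace_subset

theorem card_outerTraces_filter_mem_le [DecidableEq V] (hQ : G.IsNClique n Q)
    {q : V} (hq : q ∈ Q) (hdeg : (G.neighborSet q).encard ≤ n + 1) :
    #{S ∈ outerTraces G Q | q ∈ S} ≤ 2 := by
  have himage : (({S ∈ outerTraces G Q | q ∈ S} : Finset _) : Set (Finset V)) ⊆
      neighborTrace G Q '' (G.neighborSet q \ Q) := fun S hS => by
    obtain ⟨hS, hqS⟩ := mem_filter.1 hS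
    obtain ⟨v, hv, rfl⟩ := mem_outerTraces.1 hS
    exact ⟨v, ⟨(mem_neighborTrace.1 hqS).2.symm, hv⟩, rfl⟩
  have htwo : (G.neighborSet q \ Q).encard ≤ 2 := by
    have h := encard_neighborSet_sdiff_add_le hQ.isClique hq
    rw [hQ.card_eq] at h
    have h' : (G.neighborSet q \ Q).encard + n ≤ 2 + n := h.trans (by
      grw [hdeg, add_assoc, one_add_one_eq_two, add_comm])
    exact (ENat.add_le_add_iff_right (ENat.natCast_ne_top n)).1 h'
  exact_mod_cast (Set.encard_coe_eq_coe_finsetCard _).symm.trans_le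
    ((Set.encard_le_encard himage).trans ((Set.encard_image_le _ _).trans htwo))

theorem TwoK2Free.colorable_of_isNClique (hG : TwoK2Free G) (hQ : G.IsNClique n Q)
    (hfour : 4 ≤ n) (hn : G.CliqueFree (n + 1))
    (hdeg : ∀ v ∈ Q, (G.neighborSet v).encard ≤ n + 1) : G.Colorable n := by
  classical
  have hss : ∀ S ∈ outerTraces G Q, S ⊂ Q := fun S hS => by
    obtain ⟨v, -, rfl⟩ := mem_outerTraces.1 hS
    exact neighborTrace_ssubset hQ hn v
  obtain ⟨f, hf, hne⟩ := exists_forall_mem_sdiff_and_ne (hQ.card_eq ▸ hfour) hss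
    fun q hq => card_outerTraces_filter_mem_le hQ hq (hdeg q hq)
  have hout {v : V} (hv : v ∉ Q) : neighborTrace G Q v ∈ outerTraces G Q :=
    mem_outerTraces.2 ⟨v, hv, rfl⟩
  have hfmem {v : V} (hv : v ∉ Q) := mem_sdiff.1 (hf _ (hout hv))
  have hadj {u v : V} (hu : u ∈ Q) (hv : v ∉ Q) (hvu : G.Adj v u) : u ≠ f (neighborTrace G Q v) :=
    fun h => (hfmem hv).2 (h ▸ mem_neighborTrace.2 ⟨hu, hvu⟩)
  let C : G.Coloring Q := Coloring.mk
    (fun v => if hv : v ∈ Q then ⟨v, hv⟩ else ⟨f (neighborTrace G Q v), (hfmem hv).1⟩)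
    fun {u v} huv => by
      by_cases hu : u ∈ Q <;> by_cases hv : v ∈ Q <;>
        simp only [hu, hv, dite_true, dite_false, ne_eq, Subtype.mk.injEq]
      · exact huv.ne
      · exact hadj hu hv huv.symm
      · exact (hadj hv hu huv).symm
      · exact hne _ (hout hu) _ (hout hv) (hG.neighborTrace_ne hQ hn huv)
          (hG.card_le_card_neighborTrace_union hQ.isClique huv)
  simpa [hQ.card_eq] using C.colorable

end Traces

theorem encard_eq_five_of_nodup {α : Type*} {a b c d e : α} (h : [a, b, c, d, e].Nodup) :
    ({a, b, c, d, e} : Set α).encard = 5 := by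
  classical
  have := List.toFinset_card_of_nodup h
  simpa [← Set.encard_coe_eq_coe_finsetCard] using congrArg (Nat.cast : ℕ → ℕ∞) this

theorem TwoK2Free.colorable_two_of_card_le_four (hG : TwoK2Free G) (h3 : G.CliqueFree 3)
    (hV : ENat.card V ≤ 4) : G.Colorable 2 := by
  by_cases hw : ∃ w, G.IsIndepSet (G.neighborSet w)ᶜ
  · obtain ⟨w, hw⟩ := hw
    exact colorable_two_of_isIndepSet (isIndepSet_neighborSet_of_triangleFree G h3 w) hw
  have hedge (w : V) : ∃ x y, G.Adj x y ∧ ¬ G.Adj w x ∧ ¬ G.Adj w y := by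
    by_contra! h
    exact hw ⟨w, fun x hx y hy _ hxy => hy (h x y hxy hx)⟩
  cases isEmpty_or_nonempty V
  · exact .of_isEmpty 2
  obtain ⟨z, t, hzt, -, -⟩ := hedge (Classical.arbitrary V)
  obtain ⟨z', htz', hzz'⟩ : ∃ z', G.Adj t z' ∧ z ≠ z' := by
    obtain ⟨x, y, hxy, hzx, hzy⟩ := hedge z
    rcases hG.adj_or_adj hzt hxy with h | h | h | h
    · exact absurd h hzx
    · exact absurd h hzy
    · exact ⟨x, h, by rintro rfl; exact hzy hxy⟩
    · exact ⟨y, h, by rintro rfl; exact hzx hxy.symm⟩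
  obtain ⟨x, y, hxy, htx, hty⟩ := hedge t
  have hnodup : [t, z, z', x, y].Nodup := by
    simp only [List.nodup_cons, List.mem_cons]
    grind [SimpleGraph.adj_comm, SimpleGraph.Adj.ne]
  have hfive := encard_eq_five_of_nodup hnodup ▸ Set.encard_le_card.trans hV
  exact absurd hfive (by norm_num)

/-- Every edge `ab` leaves an edge inside the neighbourhood of `a` that avoids the neighbourhood
of `b`. Where this fails, `TwoK2Free.colorable_add_two_of_isIndepSet` gives a 4-colouring of a
`K4`-free graph of maximum degree at most five. -/
def HasPrivateEdges (G : SimpleGraph V) : Prop :=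
  ∀ ⦃a b : V⦄, G.Adj a b →
    ∃ x y, G.Adj x y ∧ G.Adj a x ∧ G.Adj a y ∧ ¬ G.Adj b x ∧ ¬ G.Adj b y

/-- The link of `a`, i.e. the subgraph induced on its neighbourhood, is the 5-cycle `b c x y d`;
the (non-)adjacencies force the five vertices to be distinct. -/
structure HasFiveCycleLink (G : SimpleGraph V) (a b c x y d : V) : Prop where
  neighborSet_eq : G.neighborSet a = {b, c, x, y, d}
  adj_bc : G.Adj b c
  adj_cx : G.Adj c x
  adj_xy : G.Adj x y
  adj_yd : G.Adj y d
  adj_db : G.Adj d b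
  not_adj_bx : ¬ G.Adj b x
  not_adj_by : ¬ G.Adj b y
  not_adj_cy : ¬ G.Adj c y
  not_adj_cd : ¬ G.Adj c d
  not_adj_xd : ¬ G.Adj x d

theorem cliqueFreeOn_neighborSet {n : ℕ} (h : G.CliqueFree (n + 1)) (a : V) :
    G.CliqueFreeOn (G.neighborSet a) n := by
  simpa using CliqueFreeOn.of_succ G ((cliqueFreeOn_univ G).2 h) (Set.mem_univ a)

theorem TwoK2Free.hasPrivateEdges (hG : TwoK2Free G) (h4 : G.CliqueFree 4)
    (hdeg : ∀ v, (G.neighborSet v).encard ≤ 5) (hcol : ¬ G.Colorable 4) :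
    HasPrivateEdges G := by
  intro a b hab
  by_contra! h
  have hind : G.IsIndepSet (G.neighborSet a \ G.neighborSet b) :=
    fun x hx y hy _ hxy => hy.2 (h x y hxy hx.1 hy.1 hx.2)
  set W := G.neighborSet b \ {a}
  have hW : (G.induce W).CliqueFree 3 :=
    (cliqueFree_induce_iff G W 3).2
      (CliqueFreeOn.subset G Set.sdiff_subset (cliqueFreeOn_neighborSet h4 b))
  have hcard : ENat.card W ≤ 4 := by
    rw [ENat.card_coe_set_eq, ← ENat.add_le_add_iff_right ENat.one_ne_top]
    exact (Set.encard_sdiff_singleton_add_one hab.symm).trans_le (hdeg b)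
  exact hcol (hG.colorable_add_two_of_isIndepSet hab.symm hind
    ((hG.induce W).colorable_two_of_card_le_four hW hcard))

theorem HasPrivateEdges.encard_commonNeighbors_add_three_le (h : HasPrivateEdges G) {a b : V}
    (hab : G.Adj a b) : (G.commonNeighbors a b).encard + 3 ≤ (G.neighborSet a).encard := by
  obtain ⟨x, y, hxy, hax, hay, hbx, hby⟩ := h hab
  have hsub : {b, x, y} ⊆ G.neighborSet a \ G.neighborSet b := by
    rintro v (rfl | rfl | rfl)
    exacts [⟨hab, G.irrefl⟩, ⟨hax, hbx⟩, ⟨hay, hby⟩]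
  have hthree : ({b, x, y} : Set V).encard = 3 := Set.encard_eq_three.2
    ⟨b, x, y, (G.ne_of_adj_of_not_adj hxy hby).symm, (G.ne_of_adj_of_not_adj hxy.symm hbx).symm,
      hxy.ne, rfl⟩
  calc (G.commonNeighbors a b).encard + 3
      ≤ (G.commonNeighbors a b).encard + (G.neighborSet a \ G.neighborSet b).encard := by
        rw [← hthree]; gcongr
    _ = (G.neighborSet a).encard := by
        rw [add_comm, commonNeighbors, Set.encard_sdiff_add_encard_inter]

theorem HasPrivateEdges.exists_private_edge_adj (hpriv : HasPrivateEdges G) (hG : TwoK2Free G)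
    {a b c : V} (hab : G.Adj a b) (hbc : G.Adj b c) :
    ∃ x y, G.Adj x y ∧ G.Adj a x ∧ G.Adj a y ∧ ¬ G.Adj b x ∧ ¬ G.Adj b y ∧ G.Adj c x := by
  obtain ⟨x, y, hxy, hax, hay, hbx, hby⟩ := hpriv hab
  rcases hG.adj_or_adj hbc hxy with h | h | hcx | hcy
  · exact absurd h hbx
  · exact absurd h hby
  · exact ⟨x, y, hxy, hax, hay, hbx, hby, hcx⟩
  · exact ⟨y, x, hxy.symm, hay, hax, hby, hbx, hcy⟩

theorem HasPrivateEdges.exists_hasFiveCycleLink (hpriv : HasPrivateEdges G) (hG : TwoK2Free G)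
    (h4 : G.CliqueFree 4) {a b c d : V} (hdeg : (G.neighborSet a).encard ≤ 5)
    (hab : G.Adj a b) (hac : G.Adj a c) (had : G.Adj a d) (hbc : G.Adj b c) (hbd : G.Adj b d)
    (hcd : c ≠ d) : ∃ x y, HasFiveCycleLink G a b c x y d := by
  classical
  have hK4 {u v w : V} (hu : G.Adj a u) (hv : G.Adj a v) (hw : G.Adj a w) (huv : G.Adj u v)
      (hvw : G.Adj v w) : ¬ G.Adj u w := fun huw =>
    cliqueFreeOn_neighborSet h4 a (t := {u, v, w}) (by simp [Set.insert_subset_iff, *])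
      (is3Clique_triple_iff.2 ⟨huv, huw, hvw⟩)
  obtain ⟨x, y, hxy, hax, hay, hbx, hby, hcx⟩ := hpriv.exists_private_edge_adj hG hab hbc
  have hcy : ¬ G.Adj c y := hK4 hac hax hay hcx hxy
  have hncd : ¬ G.Adj c d := hK4 hac hab had hbc.symm hbd
  have hxd : ¬ G.Adj x d := by
    intro hxd
    have hsub : {c, y, d} ⊆ G.commonNeighbors a x := by
      rintro v (rfl | rfl | rfl)
      exacts [⟨hac, hcx.symm⟩, ⟨hay, hxy⟩, ⟨had, hxd⟩]
    have hthree : ({c, y, d} : Set V).encard = 3 := Set.encard_eq_three.2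
      ⟨c, y, d, fun h => hby (h ▸ hbc), hcd, fun h => hby (h ▸ hbd), rfl⟩
    have hsix : (3 : ℕ∞) + 3 ≤ 5 := calc
      (3 : ℕ∞) + 3 ≤ (G.commonNeighbors a x).encard + 3 := by rw [← hthree]; gcongr
      _ ≤ 5 := (hpriv.encard_commonNeighbors_add_three_le hax).trans hdeg
    exact absurd hsix (by norm_num)
  have hyd : G.Adj y d := by
    rcases hG.adj_or_adj hbd hxy with h | h | h | h
    exacts [absurd h hbx, absurd h hby, absurd h.symm hxd, h.symm]
  have hnodup : [b, c, x, y, d].Nodup := by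
    simp only [List.nodup_cons, List.mem_cons]
    grind [SimpleGraph.adj_comm, SimpleGraph.Adj.ne]
  have hsub : {b, c, x, y, d} ⊆ G.neighborSet a := by
    rintro v (rfl | rfl | rfl | rfl | rfl) <;> assumption
  have heq := (Set.toFinite _).eq_of_subset_of_encard_le hsub
    (by rwa [encard_eq_five_of_nodup hnodup])
  exact ⟨x, y, heq.symm, hbc, hcx, hxy, hyd, hbd.symm, hbx, hby, hcy, hncd, hxd⟩

namespace HasFiveCycleLink

variable {a b c d x y u w : V}

theorem adj_iff (h : HasFiveCycleLink G a b c x y d) {v : V} :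
    G.Adj a v ↔ v = b ∨ v = c ∨ v = x ∨ v = y ∨ v = d := by
  simp [← mem_neighborSet, h.neighborSet_eq]

theorem reverse (h : HasFiveCycleLink G a b c x y d) : HasFiveCycleLink G a b d y x c where
  neighborSet_eq := by
    rw [h.neighborSet_eq]
    ext
    simp only [Set.mem_insert_iff, Set.mem_singleton_iff]
    tauto
  adj_bc := h.adj_db.symm
  adj_cx := h.adj_yd.symm
  adj_xy := h.adj_xy.symm
  adj_yd := h.adj_cx.symm
  adj_db := h.adj_bc.symm
  not_adj_bx := h.not_adj_by
  not_adj_by := h.not_adj_bx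
  not_adj_cy := mt Adj.symm h.not_adj_xd
  not_adj_cd := mt Adj.symm h.not_adj_cd
  not_adj_xd := mt Adj.symm h.not_adj_cy

theorem not_adj_of_hasFiveCycleLink (hG : TwoK2Free G) (h4 : G.CliqueFree 4)
    (hpriv : HasPrivateEdges G) (hdeg : (G.neighborSet c).encard ≤ 5)
    (ha : HasFiveCycleLink G a b c x y d)
    (hb : HasFiveCycleLink G b a c u w d) : ¬ G.Adj x u := by
  have hax : G.Adj a x := by simp [ha.adj_iff]
  have hbx : b ≠ x := (G.ne_of_adj_of_not_adj ha.adj_xy ha.not_adj_by).symm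
  obtain ⟨p, q, hc⟩ := hpriv.exists_hasFiveCycleLink hG h4 hdeg hb.adj_bc.symm ha.adj_bc.symm
    ha.adj_cx (by simp [ha.adj_iff]) hax hbx
  have hup : u = p := by
    have hbu : G.Adj b u := by simp [hb.adj_iff]
    rcases hc.adj_iff.1 hb.adj_cx with rfl | rfl | rfl | rfl | rfl
    · exact absurd hb.adj_xy hb.not_adj_by
    · exact (G.irrefl hbu).elim
    · rfl
    · exact absurd hbu hc.not_adj_cy
    · exact absurd hbu ha.not_adj_bx
  exact hup ▸ mt Adj.symm hc.not_adj_xd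

end HasFiveCycleLink

theorem HasPrivateEdges.exists_two_common_neighbors (hpriv : HasPrivateEdges G) (hG : TwoK2Free G)
    (hne : G ≠ ⊥) :
    ∃ a b c d, G.Adj a b ∧ G.Adj a c ∧ G.Adj a d ∧ G.Adj b c ∧ G.Adj b d ∧ c ≠ d := by
  obtain ⟨a, b₀, h₀⟩ := G.ne_bot_iff_exists_adj.1 hne
  obtain ⟨b, c, hbc, hab, hac, -, -⟩ := hpriv h₀
  obtain ⟨x, y, hxy, hax, hay, -, hby, hcx⟩ := hpriv.exists_private_edge_adj hG hab hbc
  exact ⟨a, x, c, y, hax, hac, hay, hcx.symm, hxy, fun h => hby (h ▸ hbc)⟩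

theorem TwoK2Free.not_hasPrivateEdges (hG : TwoK2Free G) (h4 : G.CliqueFree 4) (hne : G ≠ ⊥)
    (hdeg : ∀ v, (G.neighborSet v).encard ≤ 5) : ¬ HasPrivateEdges G := by
  intro hpriv
  obtain ⟨a, b, c, d, hab, hac, had, hbc, hbd, hcd⟩ := hpriv.exists_two_common_neighbors hG hne
  obtain ⟨x, y, ha⟩ := hpriv.exists_hasFiveCycleLink hG h4 (hdeg a) hab hac had hbc hbd hcd
  obtain ⟨u, w, hb⟩ := hpriv.exists_hasFiveCycleLink hG h4 (hdeg b) hab.symm hbc hbd hac had hcd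
  have hxu : ¬ G.Adj x u := ha.not_adj_of_hasFiveCycleLink hG h4 hpriv (hdeg c) hb
  have hyw : ¬ G.Adj y w :=
    ha.reverse.not_adj_of_hasFiveCycleLink hG h4 hpriv (hdeg d) hb.reverse
  have hax : G.Adj a x := by simp [ha.adj_iff]
  have hay : G.Adj a y := by simp [ha.adj_iff]
  have hdx : d ≠ x := G.ne_of_adj_of_not_adj ha.adj_db (mt Adj.symm ha.not_adj_bx)
  have hyu : G.Adj y u := by
    rcases hG.adj_or_adj hay hb.adj_xy with h | h | h | h
    exacts [absurd h hb.not_adj_bx, absurd h hb.not_adj_by, h, absurd h hyw]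
  obtain ⟨p, q, hy⟩ := hpriv.exists_hasFiveCycleLink hG h4 (hdeg y) hay.symm ha.adj_yd
    ha.adj_xy.symm had hax hdx
  rcases hy.adj_iff.1 hyu with rfl | rfl | rfl | rfl | rfl
  · exact hb.not_adj_by hb.adj_xy
  · exact hb.not_adj_cd hb.adj_cx
  · exact hb.not_adj_xd hy.adj_cx.symm
  · exact hxu hy.adj_yd.symm
  · exact ha.not_adj_bx (by simp [hb.adj_iff])

theorem TwoK2Free.colorable_four (hG : TwoK2Free G) (h4 : G.CliqueFree 4)
    (hdeg : ∀ v, (G.neighborSet v).encard ≤ 5) : G.Colorable 4 := by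
  by_contra hcol
  have hne : G ≠ ⊥ := by
    rintro rfl
    exact hcol ((colorable_one_iff.2 rfl).mono (by norm_num))
  exact hG.not_hasPrivateEdges h4 hne hdeg (hG.hasPrivateEdges h4 hdeg hcol)

theorem exists_maximal_isIndepSet (G : SimpleGraph V) :
    ∃ s : Set V, Maximal G.IsIndepSet s := by
  obtain ⟨s, hs⟩ := zorn_subset {s : Set V | G.IsIndepSet s} fun c hc hchain =>
    ⟨⋃₀ c, (Set.pairwise_sUnion hchain.directedOn).2 hc, fun _ => Set.subset_sUnion_of_mem⟩
  exact ⟨s, hs⟩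

theorem exists_adj_of_maximal_isIndepSet {s : Set V} (hs : Maximal G.IsIndepSet s) {v : V}
    (hv : v ∉ s) : ∃ u ∈ s, G.Adj v u := by
  by_contra! h
  exact hv (hs.le_of_ge (hs.prop.insert fun u hu _ => ⟨h u hu, fun e => h u hu e.symm⟩)
    (Set.subset_insert v s) (Set.mem_insert v s))

theorem encard_neighborSet_induce_compl_add_one_le {s : Set V} (v : (sᶜ : Set V))
    (hv : ∃ u ∈ s, G.Adj v u) :
    ((G.induce sᶜ).neighborSet v).encard + 1 ≤ (G.neighborSet v).encard := by
  obtain ⟨u, hus, hvu⟩ := hv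
  have himage : (↑) '' (G.induce sᶜ).neighborSet v ⊆ G.neighborSet v \ {u} := by
    rintro _ ⟨w, hw, rfl⟩
    exact ⟨hw, fun h => w.2 (h ▸ hus)⟩
  rw [← Set.encard_sdiff_singleton_add_one (s := G.neighborSet v) hvu,
    ← Subtype.val_injective.encard_image]
  gcongr

theorem encard_neighborSet_le_maxDegree [Fintype V] (G : SimpleGraph V) [DecidableRel G.Adj]
    (v : V) : (G.neighborSet v).encard ≤ G.maxDegree := by
  simpa [← coe_neighborFinset, Set.encard_coe_eq_coe_finsetCard] using G.degree_le_maxDegree v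

theorem cliqueFree_of_cliqueNum_lt [Finite V] {n : ℕ} (h : G.cliqueNum < n) : G.CliqueFree n :=
  fun _ hs => h.not_ge (hs.card_eq ▸ hs.isClique.card_le_cliqueNum)

theorem twoK2Free_colorable_maxDegree_sub_one_general {k : ℕ} (hk : 4 ≤ k) (hG : TwoK2Free G)
    (hdeg : ∀ v, (G.neighborSet v).encard ≤ k + 1) (hω : G.CliqueFree (k + 1)) :
    G.Colorable k := by
  by_contra hcol
  have hclique : G.CliqueFree k := fun Q hQ =>
    hcol (hG.colorable_of_isNClique hQ hk hω fun v _ => hdeg v)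
  induction k, hk using Nat.le_induction generalizing V with
  | base => exact hcol (hG.colorable_four hclique hdeg)
  | succ k hk ih =>
    obtain ⟨s, hs⟩ := exists_maximal_isIndepSet G
    have hrest : ¬ (G.induce sᶜ).Colorable k := fun h =>
      hcol (add_comm 1 k ▸ colorable_add_of_induce_compl (induce_colorable_one hs.prop) h)
    have hdeg' (v : (sᶜ : Set V)) : ((G.induce sᶜ).neighborSet v).encard ≤ k + 1 := by
      rw [← ENat.add_le_add_iff_right ENat.one_ne_top]
      exact (encard_neighborSet_induce_compl_add_one_le v
        (exists_adj_of_maximal_isIndepSet hs v.2)).trans (mod_cast hdeg v)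
    have hω' : (G.induce sᶜ).CliqueFree (k + 1) :=
      (cliqueFree_induce_iff G _ _).2 hclique.cliqueFreeOn
    exact ih (hG.induce _) hdeg' hω' hrest fun Q hQ =>
      hrest ((hG.induce _).colorable_of_isNClique hQ hk hω' fun v _ => hdeg' v)

end

theorem twoK2Free_colorable_maxDegree_sub_one
    {V : Type*} [Fintype V] (G : SimpleGraph V) [DecidableRel G.Adj]
    (hfree : TwoK2Free G) (hΔ : 5 ≤ G.maxDegree)
    (hω : G.cliqueNum ≤ G.maxDegree - 1) :
    G.Colorable (G.maxDegree - 1) ∧ G.chromaticNumber ≤ (G.maxDegree - 1 : ℕ) := by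
  have hdeg (v : V) : (G.neighborSet v).encard ≤ (G.maxDegree - 1 : ℕ) + 1 :=
    (encard_neighborSet_le_maxDegree G v).trans (mod_cast Nat.le_add_of_sub_le le_rfl)
  have hcol := twoK2Free_colorable_maxDegree_sub_one_general (by lia) hfree hdeg
    (cliqueFree_of_cliqueNum_lt (by lia))
  exact ⟨hcol, hcol.chromaticNumber_le⟩
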